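/- arXiv:2305.07720 — 3 statements merged into one kernel-verified Lean document; each statement's English description precedes it below -/
import Mathlib

section
/- Let n and k be positive integers. Let V be a unitary complex matrix indexed by (Fin n × Fin k), U a unitary complex matrix indexed by Fin n, and Π a nonzero complex matrix indexed by Fin k with Πᴴ = Π and Π * Π = Π. Assume V * (1 ⊗ Π) = U ⊗ Π, and let r be the rank of Π. Then there exist a unitary complex matrix W indexed by (Fin n × Fin k), a unitary complex matrix V' indexed by Fin (n*(k−r)), and a bijection e : (Fin n × Fin k) ≃ ((Fin r × Fin n) ⊕ Fin (n*(k−r))) such that reindexing W * V * Wᴴ along e yields the block-diagonal matrix Matrix.fromBlocks (1 ⊗ U) 0 0 V', where 1 ⊗ U is the Kronecker product of the r×r identity with U. In other words, V is unitarily conjugate to the direct sum of rank(Π) copies of U together with some unitary matrix. -/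
open Matrix

open scoped ComplexOrder in
lemma block_unitary_aux {α β : Type*} [Fintype α] [Fintype β] [DecidableEq α] [DecidableEq β]
    (A : Matrix α α ℂ) (B : Matrix α β ℂ) (D : Matrix β β ℂ)
    (hA : A ∈ Matrix.unitaryGroup α ℂ)
    (hN : Matrix.fromBlocks A B 0 D ∈ Matrix.unitaryGroup (α ⊕ β) ℂ) :
    B = 0 ∧ D ∈ Matrix.unitaryGroup β ℂ := by
  have hA2 := Matrix.mem_unitaryGroup_iff.1 hA
  have h := Matrix.mem_unitaryGroup_iff.1 hN
  rw [Matrix.star_eq_conjTranspose, Matrix.fromBlocks_conjTranspose, Matrix.fromBlocks_multiply,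
    ← Matrix.fromBlocks_one, Matrix.fromBlocks_inj] at h
  obtain ⟨h1, -, -, h4⟩ := h
  rw [Matrix.star_eq_conjTranspose] at hA2
  rw [hA2] at h1
  refine ⟨Matrix.self_mul_conjTranspose_eq_zero.1 (by simpa using h1), ?_⟩
  rw [Matrix.mem_unitaryGroup_iff, Matrix.star_eq_conjTranspose]
  simpa using h4

lemma kron_unitary_aux {α β : Type*} [Fintype α] [Fintype β] [DecidableEq α] [DecidableEq β]
    (A : Matrix α α ℂ) (B : Matrix β β ℂ)
    (hA : A ∈ Matrix.unitaryGroup α ℂ) (hB : B ∈ Matrix.unitaryGroup β ℂ) :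
    Matrix.kroneckerMap (· * ·) A B ∈ Matrix.unitaryGroup (α × β) ℂ :=
  Matrix.kronecker_mem_unitary hA hB

lemma diag_aux {k : ℕ} (P : Matrix (Fin k) (Fin k) ℂ) (hP : Pᴴ = P) :
    ∃ (Q : Matrix (Fin k) (Fin k) ℂ) (d : Fin k → ℂ), Q ∈ Matrix.unitaryGroup (Fin k) ℂ ∧
      P * Q = Q * Matrix.diagonal d ∧ P.rank = Nat.card {a // d a ≠ 0} := by
  have hH : P.IsHermitian := hP
  refine ⟨hH.eigenvectorUnitary, fun a => (hH.eigenvalues a : ℂ), hH.eigenvectorUnitary.2, ?_, ?_⟩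
  · have h := hH.spectral_theorem
    rw [Unitary.conjStarAlgAut_apply] at h
    have hQ := Matrix.mem_unitaryGroup_iff'.1 hH.eigenvectorUnitary.2
    have h2 := congrArg (· * (hH.eigenvectorUnitary : Matrix (Fin k) (Fin k) ℂ)) h
    simp only [mul_assoc] at h2
    rw [hQ, mul_one] at h2
    exact h2
  · rw [hH.rank_eq_card_non_zero_eigs, Nat.card_eq_fintype_card]
    simp

/-- Proposition `directsumform`. If `(V, Π)` is a catalytic embedding of the
unitary `U`, then `V` is unitarily conjugate to the direct sum of `rank Π` copies of `U`
together with some unitary matrix. -/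
theorem catalytic_embedding_directsum_form (n k : ℕ) (hn : 0 < n) (hk : 0 < k)
    (V : Matrix (Fin n × Fin k) (Fin n × Fin k) ℂ)
    (U : Matrix (Fin n) (Fin n) ℂ) (P : Matrix (Fin k) (Fin k) ℂ)
    (hV : V ∈ Matrix.unitaryGroup (Fin n × Fin k) ℂ)
    (hU : U ∈ Matrix.unitaryGroup (Fin n) ℂ)
    (hP_ne : P ≠ 0) (hP_herm : Pᴴ = P) (hP_idem : P * P = P)
    (hcat : V * Matrix.kroneckerMap (· * ·) (1 : Matrix (Fin n) (Fin n) ℂ) P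
          = Matrix.kroneckerMap (· * ·) U P) :
    ∃ (W : Matrix (Fin n × Fin k) (Fin n × Fin k) ℂ)
      (V' : Matrix (Fin (n * (k - P.rank))) (Fin (n * (k - P.rank))) ℂ)
      (e : (Fin n × Fin k) ≃ (Fin P.rank × Fin n) ⊕ Fin (n * (k - P.rank))),
      W ∈ Matrix.unitaryGroup (Fin n × Fin k) ℂ ∧
      V' ∈ Matrix.unitaryGroup (Fin (n * (k - P.rank))) ℂ ∧
      Matrix.reindex e e (W * V * Wᴴ) =
        Matrix.fromBlocks
          (Matrix.kroneckerMap (· * ·) (1 : Matrix (Fin P.rank) (Fin P.rank) ℂ) U) 0 0 V' := by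
  classical
  obtain ⟨Q, d, hQ, hPQ, hr⟩ := diag_aux P hP_herm
  have hQQ : Qᴴ * Q = 1 := Matrix.mem_unitaryGroup_iff'.1 hQ
  have hQs : Qᴴ ∈ Matrix.unitaryGroup (Fin k) ℂ := Unitary.star_mem hQ
  have c1 : Nat.card {a // d a ≠ 0} = Nat.card (Fin P.rank) := by simp [hr]
  let f : {a // d a ≠ 0} ≃ Fin P.rank := Fintype.equivOfCardEq (by simpa only [Nat.card_eq_fintype_card] using c1)
  have c2 : Nat.card (Fin n × {a // ¬ d a ≠ 0}) = Nat.card (Fin (n * (k - P.rank))) := by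
    rw [Nat.card_prod, Nat.card_fin, Nat.card_fin, hr, Nat.card_eq_fintype_card,
      Nat.card_eq_fintype_card, Fintype.card_subtype_compl, Fintype.card_fin]
  let g : (Fin n × {a // ¬ d a ≠ 0}) ≃ Fin (n * (k - P.rank)) := 
    Fintype.equivOfCardEq (by simpa only [Nat.card_eq_fintype_card] using c2)
  let e : (Fin n × Fin k) ≃ (Fin P.rank × Fin n) ⊕ Fin (n * (k - P.rank)) :=
    ((Equiv.prodCongr (Equiv.refl _) (Equiv.sumCompl (fun a => d a ≠ 0)).symm).trans
      (Equiv.prodSumDistrib _ _ _)).trans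
      (Equiv.sumCongr ((Equiv.prodComm _ _).trans (Equiv.prodCongr f (Equiv.refl _))) g)
  let W : Matrix (Fin n × Fin k) (Fin n × Fin k) ℂ :=
    Matrix.kroneckerMap (· * ·) (1 : Matrix (Fin n) (Fin n) ℂ) Qᴴ
  have hW : W ∈ Matrix.unitaryGroup (Fin n × Fin k) ℂ := kron_unitary_aux _ _ (one_mem _) hQs
  have hWs : Wᴴ = Matrix.kroneckerMap (· * ·) (1 : Matrix (Fin n) (Fin n) ℂ) Q := by
    have := Matrix.conjTranspose_kronecker (1 : Matrix (Fin n) (Fin n) ℂ) Qᴴ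
    simpa [W] using this
  have hM : W * V * Wᴴ ∈ Matrix.unitaryGroup (Fin n × Fin k) ℂ :=
    mul_mem (mul_mem hW hV) (Unitary.star_mem hW)
  have key : (W * V * Wᴴ) * Matrix.kroneckerMap (· * ·) (1 : Matrix (Fin n) (Fin n) ℂ)
      (Matrix.diagonal d) = Matrix.kroneckerMap (· * ·) U (Matrix.diagonal d) := by
    have hk2 : ∀ (A B : Matrix (Fin n) (Fin n) ℂ) (C D : Matrix (Fin k) (Fin k) ℂ),
        Matrix.kroneckerMap (· * ·) A C * Matrix.kroneckerMap (· * ·) B D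
          = Matrix.kroneckerMap (· * ·) (A * B) (C * D) :=
      fun A B C D => (Matrix.mul_kronecker_mul A B C D).symm
    rw [hWs, mul_assoc, hk2, ← hPQ, one_mul, ← one_mul (1 : Matrix (Fin n) (Fin n) ℂ), ← hk2,
      mul_assoc, ← mul_assoc V, hcat, hk2, hk2, mul_one, one_mul, hPQ, ← mul_assoc, hQQ, one_mul]
  have entry : ∀ i a j b, d b ≠ 0 →
      (W * V * Wᴴ) (i, a) (j, b) = if a = b then U i j else 0 := by
    intro i a j b hb
    have h := congrFun (congrFun key (i, a)) (j, b)
    have hd : Matrix.kroneckerMap (· * ·) (1 : Matrix (Fin n) (Fin n) ℂ) (Matrix.diagonal d)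
        = Matrix.diagonal (fun p : Fin n × Fin k => d p.2) := by
      ext ⟨i, a⟩ ⟨j, b⟩
      simp only [Matrix.kroneckerMap_apply, Matrix.one_apply, Matrix.diagonal_apply, Prod.mk.injEq]
      split_ifs <;> simp_all
    rw [hd, Matrix.mul_diagonal, Matrix.kroneckerMap_apply, Matrix.diagonal_apply] at h
    apply mul_right_cancel₀ hb
    rw [h]
    split_ifs with hab
    · rw [hab]
    · simp
  have es1 : ∀ x i, e.symm (Sum.inl (x, i)) = (i, (f.symm x : Fin k)) := by
    intro x i; rfl
  have es2 : ∀ y, e.symm (Sum.inr y) = ((g.symm y).1, ((g.symm y).2 : Fin k)) := by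
    intro y; rfl
  generalize hMd : W * V * Wᴴ = M at *
  have hN : Matrix.reindex e e M ∈ Matrix.unitaryGroup _ ℂ := by
    rw [Matrix.mem_unitaryGroup_iff, Matrix.star_eq_conjTranspose, Matrix.conjTranspose_reindex,
      Matrix.reindex_apply, Matrix.reindex_apply, Matrix.submatrix_mul_equiv]
    have := Matrix.mem_unitaryGroup_iff.1 hM
    rw [Matrix.star_eq_conjTranspose] at this
    rw [this, Matrix.submatrix_one_equiv]
  have h11 : (Matrix.reindex e e M).toBlocks₁₁ =
      Matrix.kroneckerMap (· * ·) (1 : Matrix (Fin P.rank) (Fin P.rank) ℂ) U := by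
    ext ⟨x, i⟩ ⟨y, j⟩
    simp only [Matrix.toBlocks₁₁, Matrix.of_apply, Matrix.reindex_apply, Matrix.submatrix_apply,
      es1, Matrix.kroneckerMap_apply, Matrix.one_apply]
    rw [entry _ _ _ _ (f.symm y).2]
    simp [Subtype.ext_iff.symm]
  have h21 : (Matrix.reindex e e M).toBlocks₂₁ = 0 := by
    ext x ⟨y, j⟩
    simp only [Matrix.toBlocks₂₁, Matrix.of_apply, Matrix.reindex_apply, Matrix.submatrix_apply,
      es1, es2, Matrix.zero_apply]
    rw [entry _ _ _ _ (f.symm y).2, if_neg]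
    intro h
    exact (g.symm x).2.2 (h ▸ (f.symm y).2)
  have hdec := Matrix.fromBlocks_toBlocks (Matrix.reindex e e M)
  rw [h11, h21] at hdec
  rw [← hdec] at hN
  obtain ⟨hB, hD⟩ := block_unitary_aux _ _ _ (kron_unitary_aux _ _ (one_mem _) hU) hN
  refine ⟨W, (Matrix.reindex e e M).toBlocks₂₂, e, hW, hD, ?_⟩
  rw [hMd]
  rw [hB] at hdec
  exact hdec.symm
end

section
/- Let R be a subring of ℂ closed under complex conjugation and let F = {a/b : a, b ∈ R, b ≠ 0}, a subfield of ℂ. Let α ∈ ℂ be algebraic over F whose minimal polynomial p over F has all coefficients in R and degree d, and let R[α] denote the smallest subring of ℂ containing R and α; assume conj α ∈ R[α]. Assume that every field embedding σ : F(α) → ℂ fixing F pointwise satisfies σ(conj z) = conj(σ z) for all z ∈ F(α), where F(α) is the subfield of ℂ generated by F and α (the Kroneckerian condition). Let Λ be a complex matrix indexed by Fin k all of whose entries lie in R, such that Λ * Λᴴ = Λᴴ * Λ and the characteristic polynomial of Λ equals p^c (viewing p as a polynomial over ℂ) for some positive integer c. Then there exists a pre-embedding Φ of dimension k from R[α] to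 R such that Φ₀(α) = Λ and, for every square complex matrix A with entries in R[α] written (uniquely) as A = Σ_{j<d} α^j • A_j with all entries of each A_j in R, one has Φ(A) = Σ_{j<d} A_j ⊗ Λ^j. -/
open Matrix

/-- A *pre-embedding of dimension `k` from `S` to `R`* (for `S R : Subring ℂ`, each closed
under complex conjugation): a family `toFun` assigning to every square complex matrix indexed
by a finite type `ι` (with all entries in `S`) a complex matrix indexed by `ι × Fin k` with all
entries in `R`, together with a fixed nonzero orthogonal projector `proj` on `Fin k` (the
catalytic projector), satisfying multiplicativity, additivity, unitality, compatibility with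
conjugate transpose, compatibility with Kronecker products by matrices over `R ∩ S`, and the
catalytic condition `Φ(A) * (1 ⊗ Π) = A ⊗ Π`. -/
structure PreEmbedding (k : ℕ) (S R : Subring ℂ) : Type 1 where
  toFun : ∀ (ι : Type) [Fintype ι] [DecidableEq ι],
    Matrix ι ι ℂ → Matrix (ι × Fin k) (ι × Fin k) ℂ
  proj : Matrix (Fin k) (Fin k) ℂ
  hS_conj : ∀ z ∈ S, (starRingEnd ℂ) z ∈ S
  hR_conj : ∀ z ∈ R, (starRingEnd ℂ) z ∈ R
  proj_ne_zero : proj ≠ 0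
  proj_herm : proj.conjTranspose = proj
  proj_idem : proj * proj = proj
  mem_R : ∀ (ι : Type) [Fintype ι] [DecidableEq ι] (A : Matrix ι ι ℂ),
    (∀ i j, A i j ∈ S) → ∀ p q, toFun ι A p q ∈ R
  map_mul : ∀ (ι : Type) [Fintype ι] [DecidableEq ι] (A B : Matrix ι ι ℂ),
    (∀ i j, A i j ∈ S) → (∀ i j, B i j ∈ S) → toFun ι (A * B) = toFun ι A * toFun ι B
  map_add : ∀ (ι : Type) [Fintype ι] [DecidableEq ι] (A B : Matrix ι ι ℂ),
    (∀ i j, A i j ∈ S) → (∀ i j, B i j ∈ S) → toFun ι (A + B) = toFun ι A + toFun ι B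
  map_one : ∀ (ι : Type) [Fintype ι] [DecidableEq ι], toFun ι (1 : Matrix ι ι ℂ) = 1
  map_conjTranspose : ∀ (ι : Type) [Fintype ι] [DecidableEq ι] (A : Matrix ι ι ℂ),
    (∀ i j, A i j ∈ S) → toFun ι Aᴴ = (toFun ι A)ᴴ
  map_kronecker : ∀ (ι κ : Type) [Fintype ι] [DecidableEq ι] [Fintype κ] [DecidableEq κ]
    (C : Matrix ι ι ℂ) (A : Matrix κ κ ℂ),
    (∀ i j, C i j ∈ R) → (∀ i j, C i j ∈ S) → (∀ i j, A i j ∈ S) →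
    toFun (ι × κ) (Matrix.kroneckerMap (· * ·) C A) =
      Matrix.reindex (Equiv.prodAssoc ι κ (Fin k)).symm (Equiv.prodAssoc ι κ (Fin k)).symm
        (Matrix.kroneckerMap (· * ·) C (toFun κ A))
  catalytic : ∀ (ι : Type) [Fintype ι] [DecidableEq ι] (A : Matrix ι ι ℂ),
    (∀ i j, A i j ∈ S) →
    toFun ι A * Matrix.kroneckerMap (· * ·) (1 : Matrix ι ι ℂ) proj =
      Matrix.kroneckerMap (· * ·) A proj

/-- `Φ₀ s`: the pre-embedding applied to the `1 × 1` matrix with entry `s`, reindexed to a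
matrix indexed by `Fin k`. -/
def PreEmbedding.apply0 {k : ℕ} {S R : Subring ℂ} (E : PreEmbedding k S R) (s : ℂ) :
    Matrix (Fin k) (Fin k) ℂ :=
  Matrix.reindex (Equiv.punitProd (Fin k)) (Equiv.punitProd (Fin k))
    (E.toFun Unit (Matrix.of fun _ _ => s))

open Polynomial in
lemma memS_iff (R : Subring ℂ) (α z : ℂ) :
    z ∈ Subring.closure (insert α (R : Set ℂ)) ↔ ∃ q : Polynomial R, aeval α q = z := by
  constructor
  · intro hz
    have h : Subring.closure (insert α (R : Set ℂ)) ≤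
        ((aeval α : Polynomial R →ₐ[R] ℂ) : Polynomial R →+* ℂ).range := by
      rw [Subring.closure_le]
      rintro x (rfl | hx)
      · exact ⟨X, by simp⟩
      · exact ⟨Polynomial.C ⟨x, hx⟩, (aeval_C (A := ℂ) α (⟨x, hx⟩ : R)).trans rfl⟩
    obtain ⟨q, hq⟩ := h hz
    exact ⟨q, hq⟩
  · rintro ⟨q, rfl⟩
    rw [aeval_eq_sum_range]
    refine Subring.sum_mem _ fun i _ => ?_
    rw [Algebra.smul_def]
    have h1 : ((q.coeff i : R) : ℂ) ∈ Subring.closure (insert α (R : Set ℂ)) :=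
      Subring.subset_closure (Or.inr (q.coeff i).2)
    have h2 : α ∈ Subring.closure (insert α (R : Set ℂ)) :=
      Subring.subset_closure (Or.inl rfl)
    exact Subring.mul_mem _ h1 (Subring.pow_mem _ h2 _)

open scoped Matrix.Norms.L2Operator in
lemma aeval_eq_star_of_normal (k : ℕ) (L : Matrix (Fin k) (Fin k) ℂ) (h : IsStarNormal L)
    (q : Polynomial ℂ) (e : ∀ z ∈ spectrum ℂ L, q.eval z = star z) :
    Polynomial.aeval L q = star L := by
  rw [← cfc_star_id (R := ℂ) L, ← cfc_polynomial (R := ℂ) q L]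
  exact cfc_congr e

open scoped Matrix.Norms.L2Operator in
lemma aeval_eq_zero_of_normal (k : ℕ) (L : Matrix (Fin k) (Fin k) ℂ) (h : IsStarNormal L)
    (q : Polynomial ℂ) (e : ∀ z ∈ spectrum ℂ L, q.eval z = 0) :
    Polynomial.aeval L q = 0 := by
  rw [← cfc_zero (R := ℂ) L, ← cfc_polynomial (R := ℂ) q L]
  exact cfc_congr e

lemma frac_subfield (R : Subring ℂ) :
    ((Subfield.closure (R : Set ℂ) : Subfield ℂ) : Set ℂ) =
      {z : ℂ | ∃ a ∈ R, ∃ b ∈ R, b ≠ 0 ∧ z = a / b} := by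
  ext z
  simp only [SetLike.mem_coe, Subfield.mem_closure_iff, Subring.closure_eq, Set.mem_ofPred_eq]
  constructor
  · rintro ⟨y, hy, w, hw, rfl⟩
    by_cases h : w = 0
    · exact ⟨0, R.zero_mem, 1, R.one_mem, one_ne_zero, by simp [h]⟩
    · exact ⟨y, hy, w, hw, h, rfl⟩
  · rintro ⟨y, hy, w, hw, _, rfl⟩
    exact ⟨y, hy, w, hw, rfl⟩

lemma minpoly_map (K : Subfield ℂ) (α : ℂ) (p : Polynomial ℂ)
    (hp_monic : p.Monic) (hp_coeffF : ∀ m, p.coeff m ∈ K) (hp_root : p.eval α = 0)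
    (hp_min : ∀ q : Polynomial ℂ, (∀ m, q.coeff m ∈ K) → q ≠ 0 → q.eval α = 0 →
      p.degree ≤ q.degree) :
    IsIntegral K α ∧ (minpoly K α).map (algebraMap K ℂ) = p := by
  have h1 : p ∈ Polynomial.lifts (algebraMap K ℂ) := by
    rw [Polynomial.lifts_iff_coeff_lifts]
    intro n
    exact ⟨⟨_, hp_coeffF n⟩, rfl⟩
  obtain ⟨P, hP, hPd, hPm⟩ := Polynomial.lifts_and_degree_eq_and_monic h1 hp_monic
  have hroot : Polynomial.aeval α P = 0 := by
    rw [← Polynomial.eval_map_algebraMap, hP, hp_root]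
  have : P = minpoly K α := by
    refine minpoly.unique _ _ hPm hroot fun q hq hq0 => ?_
    rw [hPd, ← Polynomial.degree_map q (algebraMap K ℂ)]
    refine hp_min _ (fun m => ?_) (hq.map _).ne_zero ?_
    · rw [Polynomial.coeff_map]
      exact (q.coeff m).2
    · rw [Polynomial.eval_map_algebraMap, hq0]
  exact ⟨⟨P, hPm, hroot⟩, by rw [← this, hP]⟩

open IntermediateField in
lemma kron_root (K : Subfield ℂ) (α : ℂ) (p : Polynomial ℂ) (hint : IsIntegral K α)
    (hmin : (minpoly K α).map (algebraMap K ℂ) = p)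
    (F : Set ℂ) (hF : F = (K : Set ℂ))
    (hKron : ∀ σ : Subfield.closure (insert α F) →+* ℂ,
      (∀ x : Subfield.closure (insert α F), (x : ℂ) ∈ F → σ x = (x : ℂ)) →
      ∀ (z : ℂ) (hz : z ∈ Subfield.closure (insert α F))
        (hz' : (starRingEnd ℂ) z ∈ Subfield.closure (insert α F)),
        σ ⟨(starRingEnd ℂ) z, hz'⟩ = (starRingEnd ℂ) (σ ⟨z, hz⟩))
    (q : Polynomial K) (hq : Polynomial.aeval α q = (starRingEnd ℂ) α)
    (l : ℂ) (hl : p.eval l = 0) : Polynomial.aeval l q = (starRingEnd ℂ) l := by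
  subst hF
  have hle : Subfield.closure (insert α (K : Set ℂ)) ≤ (K⟮α⟯).toSubfield := by
    rw [Subfield.closure_le]
    rintro x (rfl | hx)
    · exact mem_adjoin_simple_self K x
    · exact (K⟮α⟯).algebraMap_mem ⟨x, hx⟩
  have hl' : l ∈ (minpoly K α).aroots ℂ := by
    rw [Polynomial.mem_aroots]
    refine ⟨minpoly.ne_zero hint, ?_⟩
    rw [← Polynomial.eval_map_algebraMap, hmin, hl]
  let τ : K⟮α⟯ →ₐ[K] ℂ := (algHomAdjoinIntegralEquiv K hint).symm ⟨l, hl'⟩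
  have hτ : τ (AdjoinSimple.gen K α) = l := algHomAdjoinIntegralEquiv_symm_apply_gen K hint _
  let σ : Subfield.closure (insert α (K : Set ℂ)) →+* ℂ :=
    (τ : K⟮α⟯ →+* ℂ).comp (Subfield.inclusion hle)
  have hα : α ∈ Subfield.closure (insert α (K : Set ℂ)) :=
    Subfield.subset_closure (Or.inl rfl)
  have hα' : (starRingEnd ℂ) α ∈ Subfield.closure (insert α (K : Set ℂ)) := by
    rw [← hq, Polynomial.aeval_eq_sum_range]
    refine Subfield.sum_mem _ fun i _ => ?_
    rw [Algebra.smul_def]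
    exact Subfield.mul_mem _ (Subfield.subset_closure (Or.inr (q.coeff i).2))
      (Subfield.pow_mem _ hα _)
  have key := hKron σ (fun x hx => τ.commutes ⟨x, hx⟩) α hα hα'
  have e1 : σ ⟨α, hα⟩ = l := hτ
  have e2 : σ ⟨(starRingEnd ℂ) α, hα'⟩ = Polynomial.aeval l q := by
    rw [← hτ, Polynomial.aeval_algHom_apply]
    change τ _ = τ _
    congr 1
    apply Subtype.ext
    change (starRingEnd ℂ) α = ((K⟮α⟯).val (Polynomial.aeval (AdjoinSimple.gen K α) q))
    rw [← Polynomial.aeval_algHom_apply, ← hq]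
    rfl
  rw [← e2, key, e1]

/-- A star-compatible ring-hom-like map gives the pre-embedding. -/
lemma exists_phi (k : ℕ) (R : Subring ℂ)
    (hR : ∀ z ∈ R, (starRingEnd ℂ) z ∈ R)
    (F : Set ℂ) (hF : F = {z : ℂ | ∃ a ∈ R, ∃ b ∈ R, b ≠ 0 ∧ z = a / b})
    (α : ℂ) (p : Polynomial ℂ)
    (hp_monic : p.Monic) (hp_coeffF : ∀ m, p.coeff m ∈ F)
    (hp_root : p.eval α = 0)
    (hp_min : ∀ q : Polynomial ℂ, (∀ m, q.coeff m ∈ F) → q ≠ 0 → q.eval α = 0 →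
      p.degree ≤ q.degree)
    (hconjα : (starRingEnd ℂ) α ∈ Subring.closure (insert α (R : Set ℂ)))
    (hKron : ∀ σ : Subfield.closure (insert α F) →+* ℂ,
      (∀ x : Subfield.closure (insert α F), (x : ℂ) ∈ F → σ x = (x : ℂ)) →
      ∀ (z : ℂ) (hz : z ∈ Subfield.closure (insert α F))
        (hz' : (starRingEnd ℂ) z ∈ Subfield.closure (insert α F)),
        σ ⟨(starRingEnd ℂ) z, hz'⟩ = (starRingEnd ℂ) (σ ⟨z, hz⟩))
    (Λ : Matrix (Fin k) (Fin k) ℂ)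
    (hΛnormal : Λ * Λᴴ = Λᴴ * Λ)
    (c : ℕ) (hc : 0 < c) (hΛcharpoly : Λ.charpoly = p ^ c) :
    ∃ φ : ℂ → Matrix (Fin k) (Fin k) ℂ,
      (∀ q : Polynomial R, φ (Polynomial.aeval α q) = Polynomial.aeval Λ q) ∧
      φ ((starRingEnd ℂ) α) = Λᴴ := by
  have hnorm : IsStarNormal Λ := ⟨hΛnormal.symm⟩
  set K : Subfield ℂ := Subfield.closure (R : Set ℂ) with hK
  have hFK : F = (K : Set ℂ) := by rw [hF, hK, frac_subfield]
  obtain ⟨hint, hmin⟩ := minpoly_map K α p hp_monic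
    (fun m => by simpa [hFK] using hp_coeffF m) hp_root
    (fun q hq => hp_min q (fun m => by simpa [hFK] using hq m))
  have hspec : ∀ z ∈ spectrum ℂ Λ, p.eval z = 0 := by
    intro z hz
    rw [Matrix.mem_spectrum_iff_isRoot_charpoly, hΛcharpoly, Polynomial.IsRoot,
      Polynomial.eval_pow] at hz
    exact eq_zero_of_pow_eq_zero hz
  have hpΛ : Polynomial.aeval Λ p = 0 := aeval_eq_zero_of_normal k Λ hnorm p hspec
  let ι : R →+* K := Subring.inclusion (T := K.toSubring) (fun x hx => Subfield.subset_closure hx)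
  have hι : (algebraMap K ℂ).comp ι = algebraMap R ℂ := rfl
  have hmat : ∀ q : Polynomial R,
      Polynomial.aeval Λ q = Polynomial.aeval Λ (q.map (algebraMap R ℂ)) := by
    intro q
    rw [Polynomial.aeval_map_algebraMap]
  have hker : ∀ q : Polynomial R, Polynomial.aeval α q = 0 → Polynomial.aeval Λ q = 0 := by
    intro q hq
    have h1 : Polynomial.aeval α (q.map ι) = 0 := by
      rw [← Polynomial.eval_map_algebraMap, Polynomial.map_map, hι,
        Polynomial.eval_map_algebraMap, hq]
    have h2 : p ∣ q.map (algebraMap R ℂ) := by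
      rw [← hι, ← Polynomial.map_map, ← hmin]
      exact Polynomial.map_dvd _ (minpoly.dvd _ _ h1)
    obtain ⟨r, hr⟩ := h2
    rw [hmat, hr, _root_.map_mul, hpΛ, zero_mul]
  classical
  let φ : ℂ → Matrix (Fin k) (Fin k) ℂ := fun s =>
    if h : ∃ q : Polynomial R, Polynomial.aeval α q = s then Polynomial.aeval Λ h.choose else 0
  have hφ : ∀ q : Polynomial R, φ (Polynomial.aeval α q) = Polynomial.aeval Λ q := by
    intro q
    have h : ∃ q' : Polynomial R, Polynomial.aeval α q' = Polynomial.aeval α q := ⟨q, rfl⟩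
    simp only [φ, dif_pos h]
    rw [← sub_eq_zero, ← _root_.map_sub]
    apply hker
    rw [_root_.map_sub, h.choose_spec, sub_self]
  refine ⟨φ, hφ, ?_⟩
  obtain ⟨q, hq⟩ := (memS_iff R α _).1 hconjα
  rw [← hq, hφ, hmat]
  refine aeval_eq_star_of_normal k Λ hnorm _ fun z hz => ?_
  have := kron_root K α p hint hmin F hFK hKron (q.map ι) ?_ z (hspec z hz)
  · rw [← Polynomial.eval_map_algebraMap, Polynomial.map_map, hι] at this
    exact this
  · rw [← Polynomial.eval_map_algebraMap, Polynomial.map_map, hι,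
        Polynomial.eval_map_algebraMap, hq]

lemma aeval_mem_R (k : ℕ) (R : Subring ℂ) (Λ : Matrix (Fin k) (Fin k) ℂ)
    (hΛR : ∀ i j, Λ i j ∈ R) (q : Polynomial R) (i j : Fin k) :
    (Polynomial.aeval Λ q) i j ∈ R := by
  let Λ' : Matrix (Fin k) (Fin k) R := Matrix.of fun i j => ⟨Λ i j, hΛR i j⟩
  have h : (Algebra.ofId R ℂ).mapMatrix Λ' = Λ := by
    ext i j; rfl
  rw [← h, Polynomial.aeval_algHom_apply]
  exact ((Polynomial.aeval Λ' q) i j).2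

lemma aeval_mulVec (k : ℕ) (R : Subring ℂ) (Λ : Matrix (Fin k) (Fin k) ℂ) (α : ℂ)
    (v : Fin k → ℂ) (hv : Λ *ᵥ v = α • v) (q : Polynomial R) :
    (Polynomial.aeval Λ q) *ᵥ v = (Polynomial.aeval α q : ℂ) • v := by
  induction q using Polynomial.induction_on' with
  | add p q hp hq => rw [_root_.map_add, _root_.map_add, Matrix.add_mulVec, hp, hq, add_smul]
  | monomial n a =>
    have hpow : (Λ ^ n) *ᵥ v = α ^ n • v := by
      induction n with
      | zero => simp
      | succ n ih => rw [pow_succ, ← Matrix.mulVec_mulVec, hv, Matrix.mulVec_smul, ih, smul_smul,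
          pow_succ, mul_comm]
    rw [Polynomial.aeval_monomial, Polynomial.aeval_monomial, ← Algebra.smul_def,
      ← Algebra.smul_def, Matrix.smul_mulVec, hpow, smul_assoc]

open scoped ComplexOrder in
lemma exists_proj (k : ℕ) (v : Fin k → ℂ) (hv : v ≠ 0) :
    ∃ P : Matrix (Fin k) (Fin k) ℂ, P ≠ 0 ∧ Pᴴ = P ∧ P * P = P ∧
      ∀ (M : Matrix (Fin k) (Fin k) ℂ) (a : ℂ), M *ᵥ v = a • v → M * P = a • P := by
  have hn : star v ⬝ᵥ v ≠ 0 := by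
    intro h; exact hv (dotProduct_star_self_eq_zero.1 h)
  have hstar : star (star v ⬝ᵥ v) = star v ⬝ᵥ v := by
    rw [← Matrix.star_dotProduct_star, star_star]
  refine ⟨(star v ⬝ᵥ v)⁻¹ • Matrix.vecMulVec v (star v), ?_, ?_, ?_, ?_⟩
  · intro h
    rw [smul_eq_zero_iff_right (inv_ne_zero hn), Matrix.vecMulVec_eq_zero] at h
    rcases h with h | h
    · exact hv h
    · exact hv (star_eq_zero.1 h)
  · rw [Matrix.conjTranspose_smul, star_inv₀, hstar, Matrix.conjTranspose_vecMulVec, star_star]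
  · rw [Matrix.smul_mul, Matrix.mul_smul, Matrix.vecMulVec_mul_vecMulVec, smul_smul]
    ext i j
    simp [Matrix.vecMulVec_apply]
    field_simp
  · intro M a h
    rw [Matrix.mul_smul, Matrix.mul_vecMulVec, h, Matrix.smul_vecMulVec, smul_comm]

/-- Proposition `lamblin`, part 2 / standard catalytic embeddings. Given a
normal pseudo-companion matrix `Λ` over `R` for the minimal polynomial `p` of `α` over
`F = Frac(R)` (whose coefficients lie in `R`), and assuming `F(α)` is Kroneckerian, there is a
pre-embedding `Φ` of dimension `k` from `R[α]` to `R` with `Φ₀(α) = Λ` and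
`Φ(Σ_j α^j • A_j) = Σ_j A_j ⊗ Λ^j`. -/
theorem standard_preEmbedding_exists (k : ℕ) (R : Subring ℂ)
    (hR : ∀ z ∈ R, (starRingEnd ℂ) z ∈ R)
    (F : Set ℂ) (hF : F = {z : ℂ | ∃ a ∈ R, ∃ b ∈ R, b ≠ 0 ∧ z = a / b})
    (α : ℂ)
    (p : Polynomial ℂ) (d : ℕ)
    (hp_monic : p.Monic) (hp_coeffF : ∀ m, p.coeff m ∈ F) (hp_coeffR : ∀ m, p.coeff m ∈ R)
    (hp_root : p.eval α = 0) (hp_deg : p.natDegree = d)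
    (hp_min : ∀ q : Polynomial ℂ, (∀ m, q.coeff m ∈ F) → q ≠ 0 → q.eval α = 0 →
      p.degree ≤ q.degree)
    (hconjα : (starRingEnd ℂ) α ∈ Subring.closure (insert α (R : Set ℂ)))
    (hKron : ∀ σ : Subfield.closure (insert α F) →+* ℂ,
      (∀ x : Subfield.closure (insert α F), (x : ℂ) ∈ F → σ x = (x : ℂ)) →
      ∀ (z : ℂ) (hz : z ∈ Subfield.closure (insert α F))
        (hz' : (starRingEnd ℂ) z ∈ Subfield.closure (insert α F)),
        σ ⟨(starRingEnd ℂ) z, hz'⟩ = (starRingEnd ℂ) (σ ⟨z, hz⟩))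
    (Λ : Matrix (Fin k) (Fin k) ℂ)
    (hΛR : ∀ i j, Λ i j ∈ R)
    (hΛnormal : Λ * Λᴴ = Λᴴ * Λ)
    (c : ℕ) (hc : 0 < c) (hΛcharpoly : Λ.charpoly = p ^ c) :
    ∃ E : PreEmbedding k (Subring.closure (insert α (R : Set ℂ))) R,
      E.apply0 α = Λ ∧
      ∀ (ι : Type) [Fintype ι] [DecidableEq ι] (A : Matrix ι ι ℂ),
        (∀ i j, A i j ∈ Subring.closure (insert α (R : Set ℂ))) →
        ∀ M : Fin d → Matrix ι ι ℂ,
          (∀ j i i', M j i i' ∈ R) →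
          A = ∑ j : Fin d, α ^ (j : ℕ) • M j →
          E.toFun ι A = ∑ j : Fin d, Matrix.kroneckerMap (· * ·) (M j) (Λ ^ (j : ℕ)) := by
  obtain ⟨φ, hφ, hφα⟩ := exists_phi k R hR F hF α p hp_monic hp_coeffF hp_root hp_min hconjα hKron
    Λ hΛnormal c hc hΛcharpoly
  set S := Subring.closure (insert α (R : Set ℂ)) with hS
  have memS : ∀ z, z ∈ S ↔ ∃ q : Polynomial R, Polynomial.aeval α q = z := memS_iff R α
  have φadd : ∀ x ∈ S, ∀ y ∈ S, φ (x + y) = φ x + φ y := by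
    intro x hx y hy
    obtain ⟨q, rfl⟩ := (memS x).1 hx
    obtain ⟨r, rfl⟩ := (memS y).1 hy
    rw [← _root_.map_add, hφ, hφ, hφ, _root_.map_add]
  have φmul : ∀ x ∈ S, ∀ y ∈ S, φ (x * y) = φ x * φ y := by
    intro x hx y hy
    obtain ⟨q, rfl⟩ := (memS x).1 hx
    obtain ⟨r, rfl⟩ := (memS y).1 hy
    rw [← _root_.map_mul, hφ, hφ, hφ, _root_.map_mul]
  have φR : ∀ x ∈ R, φ x = x • (1 : Matrix (Fin k) (Fin k) ℂ) := by
    intro x hx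
    have h := hφ (Polynomial.C ⟨x, hx⟩)
    rw [Polynomial.aeval_C, Polynomial.aeval_C,
      Algebra.algebraMap_eq_smul_one (A := Matrix (Fin k) (Fin k) ℂ)] at h
    exact h
  have φα : φ α = Λ := by simpa using hφ Polynomial.X
  have RS : ∀ x ∈ R, x ∈ S := fun x hx => Subring.subset_closure (Or.inr hx)
  have αS : α ∈ S := Subring.subset_closure (Or.inl rfl)
  have φ0 : φ 0 = 0 := by rw [φR 0 R.zero_mem, zero_smul]
  have φ1 : φ 1 = 1 := by rw [φR 1 R.one_mem, one_smul]
  have φneg : ∀ x ∈ S, φ (-x) = - φ x := by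
    intro x hx
    rw [eq_neg_iff_add_eq_zero, ← φadd _ (S.neg_mem hx) _ hx, neg_add_cancel, φ0]
  have φsum : ∀ {ι : Type} (s : Finset ι) (f : ι → ℂ), (∀ i, f i ∈ S) →
      φ (∑ i ∈ s, f i) = ∑ i ∈ s, φ (f i) := by
    intro ι s f hf
    classical
    induction s using Finset.induction_on with
    | empty => simpa using φ0
    | insert a s ha ih =>
      rw [Finset.sum_insert ha, Finset.sum_insert ha, φadd _ (hf a) _ (S.sum_mem fun i _ => hf i),
        ih]
  have hconj : ∀ z ∈ S, (starRingEnd ℂ) z ∈ S ∧ φ ((starRingEnd ℂ) z) = (φ z)ᴴ := by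
    intro z hz
    rw [hS] at hz
    induction hz using Subring.closure_induction with
    | mem x hx =>
      rcases hx with rfl | hx
      · exact ⟨hconjα, by rw [hφα, φα]⟩
      · refine ⟨RS _ (hR x hx), ?_⟩
        rw [φR _ (hR x hx), φR _ hx, Matrix.conjTranspose_smul, Matrix.conjTranspose_one]
        rfl
    | zero => simp [φ0, S.zero_mem]
    | one => simp [φ1, S.one_mem]
    | add x y hx hy ihx ihy =>
      rw [_root_.map_add]
      exact ⟨S.add_mem ihx.1 ihy.1, by
        rw [φadd _ ihx.1 _ ihy.1, φadd _ hx _ hy, ihx.2, ihy.2, Matrix.conjTranspose_add]⟩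
    | neg x hx ihx =>
      rw [_root_.map_neg]
      exact ⟨S.neg_mem ihx.1, by
        rw [φneg _ ihx.1, φneg _ hx, ihx.2, Matrix.conjTranspose_neg]⟩
    | mul x y hx hy ihx ihy =>
      rw [_root_.map_mul]
      refine ⟨S.mul_mem ihx.1 ihy.1, ?_⟩
      rw [mul_comm, φmul _ ihy.1 _ ihx.1, φmul _ hx _ hy, ihx.2, ihy.2, Matrix.conjTranspose_mul]
  obtain ⟨v, hv0, hv⟩ : ∃ v : Fin k → ℂ, v ≠ 0 ∧ Λ *ᵥ v = α • v := by
    have h : (Matrix.scalar (Fin k) α - Λ).det = 0 := by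
      rw [← Matrix.eval_charpoly, hΛcharpoly, Polynomial.eval_pow, hp_root, zero_pow hc.ne']
    obtain ⟨v, hv0, hv⟩ := Matrix.exists_mulVec_eq_zero_iff.2 h
    refine ⟨v, hv0, ?_⟩
    rw [Matrix.sub_mulVec, sub_eq_zero] at hv
    rw [← hv]
    ext i
    simp [Matrix.mulVec_diagonal]
  obtain ⟨P, hP0, hPh, hPi, hPm⟩ := exists_proj k v hv0
  have φP : ∀ z ∈ S, φ z * P = z • P := by
    intro z hz
    obtain ⟨q, rfl⟩ := (memS z).1 hz
    rw [hφ]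
    exact hPm _ _ (aeval_mulVec k R Λ α v hv q)
  have φmem : ∀ z ∈ S, ∀ i j, φ z i j ∈ R := by
    intro z hz i j
    obtain ⟨q, rfl⟩ := (memS z).1 hz
    rw [hφ]
    exact aeval_mem_R k R Λ hΛR q i j
  refine ⟨{
    toFun := fun ι _ _ A => Matrix.of fun x y => φ (A x.1 y.1) x.2 y.2
    proj := P
    hS_conj := fun z hz => (hconj z hz).1
    hR_conj := hR
    proj_ne_zero := hP0
    proj_herm := hPh
    proj_idem := hPi
    mem_R := fun ι _ _ A hA x y => φmem _ (hA _ _) _ _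
    map_mul := ?_
    map_add := ?_
    map_one := ?_
    map_conjTranspose := ?_
    map_kronecker := ?_
    catalytic := ?_ }, ?_, ?_⟩
  · intro ι _ _ A B hA hB
    ext ⟨i, a⟩ ⟨j, b⟩
    simp only [Matrix.of_apply, Matrix.mul_apply, Fintype.sum_prod_type]
    rw [φsum _ _ fun x => S.mul_mem (hA _ _) (hB _ _), Matrix.sum_apply]
    refine Finset.sum_congr rfl fun x _ => ?_
    rw [φmul _ (hA _ _) _ (hB _ _), Matrix.mul_apply]
  · intro ι _ _ A B hA hB
    ext ⟨i, a⟩ ⟨j, b⟩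
    simp [φadd _ (hA i j) _ (hB i j)]
  · intro ι _ _
    ext ⟨i, a⟩ ⟨j, b⟩
    by_cases h : i = j
    · subst h
      simp [φ1, Matrix.one_apply]
    · simp [φ0, Matrix.one_apply, h]
  · intro ι _ _ A hA
    ext ⟨i, a⟩ ⟨j, b⟩
    have := (hconj _ (hA j i)).2
    simp only [Matrix.of_apply, Matrix.conjTranspose_apply]
    exact congrFun (congrFun this a) b
  · intro ι κ _ _ _ _ C A hCR hCS hA
    ext ⟨⟨i, i'⟩, a⟩ ⟨⟨j, j'⟩, b⟩
    simp [φmul _ (hCS i j) _ (hA i' j'), φR _ (hCR i j)]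
  · intro ι _ _ A hA
    ext ⟨i, a⟩ ⟨j, b⟩
    have h := congrFun (congrFun (φP _ (hA i j)) a) b
    rw [Matrix.mul_apply] at h
    simp only [Matrix.mul_apply, Fintype.sum_prod_type, Matrix.of_apply,
      Matrix.kroneckerMap_apply, Matrix.one_apply]
    rw [Finset.sum_eq_single j]
    · simpa using h
    · intro x _ hx
      simp [hx]
    · simp
  · ext a b
    simp [PreEmbedding.apply0, φα]
  · intro ι _ _ A hA M hM hAM
    have φpow : ∀ n : ℕ, φ (α ^ n) = Λ ^ n := by
      intro n
      simpa using hφ (Polynomial.X ^ n)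
    ext ⟨i, a⟩ ⟨j, b⟩
    subst hAM
    simp only [Matrix.of_apply, Matrix.sum_apply, Matrix.smul_apply, smul_eq_mul,
      Matrix.kroneckerMap_apply]
    rw [φsum _ _ fun x => S.mul_mem (S.pow_mem αS _) (RS _ (hM _ _ _)), Matrix.sum_apply]
    refine Finset.sum_congr rfl fun x _ => ?_
    rw [mul_comm, φmul _ (RS _ (hM _ _ _)) _ (S.pow_mem αS _), φpow, φR _ (hM _ _ _)]
    simp
end

section
/- Let R and S be subrings of ℂ each closed under complex conjugation, set T = R ∩ S, and let F_T = {a/b : a, b ∈ T, b ≠ 0} and F_R = {a/b : a, b ∈ R, b ≠ 0}, subfields of ℂ. Let α ∈ S be algebraic over F_T with minimal polynomial p over F_T of degree d, assume every element of S can be written as an F_T-linear combination of powers of α, and let K ⊆ ℂ be the splitting field of p over F_T. Let E := F_R(α) be the subfield of ℂ generated by F_R and α. Assume: K is closed under complex conjugation; every field embedding σ : E → ℂ fixing F_R pointwise satisfies σ(conj z) = conj(σ z) for all z ∈ E (the Kroneckerian condition); and F_T = K ∩ F_R. Let Φ be a pre-embedding of dimension k from S to R. Then there exists a nonzero complex matrix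 Π indexed by Fin k, all of whose entries lie in E, with Πᴴ = Π and Π * Π = Π, such that for every s ∈ S: Φ₀(s) = Σ_σ (s • Π).map σ, where the sum ranges over all field embeddings σ : E → ℂ fixing F_R pointwise (there are finitely many), and (s • Π).map σ applies σ to each entry of s • Π (all entries of s • Π lie in E). In other words, Φ₀(s) is the relative field trace of s • Π from E to F_R, applied entrywise. -/
open Matrix

namespace PreEmbAux
open Polynomial

noncomputable def lg {K : Type*} [Field K] (p : K[X]) (β : K) : K[X] :=
  C ((p /ₘ (X - C β)).eval β)⁻¹ * (p /ₘ (X - C β))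

lemma lg_map {K L : Type*} [Field K] [Field L] (σ : K →+* L) (p : K[X]) (β : K) :
    (lg p β).map σ = lg (p.map σ) (σ β) := by
  simp only [lg, Polynomial.map_mul, map_C, map_inv₀]
  rw [map_divByMonic σ (monic_X_sub_C β)]
  have h : (p.map σ /ₘ (X - C β).map σ) = (p /ₘ (X - C β)).map σ :=
    (map_divByMonic σ (monic_X_sub_C β)).symm
  simp only [Polynomial.map_sub, map_X, map_C] at h ⊢
  rw [h, Polynomial.eval_map, Polynomial.eval₂_hom]

lemma lg_self {K : Type*} [Field K] {p : K[X]} (hs : p.Separable) {β : K} (h : p.IsRoot β) :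
    (lg p β).eval β = 1 := by
  have h1 := mul_divByMonic_eq_iff_isRoot.mpr h
  have h2 : (p /ₘ (X - C β)).eval β ≠ 0 := by
    have h3 : (derivative p).eval β = (p /ₘ (X - C β)).eval β := by
      conv_lhs => rw [← h1]
      simp
    rw [← h3]
    have := hs.aeval_derivative_ne_zero (x := β) (by simpa using h)
    simpa using this
  simp [lg, h2]

lemma lg_ne {K : Type*} [Field K] {p : K[X]} {β γ : K} (h : p.IsRoot β) (h' : p.IsRoot γ)
    (hne : γ ≠ β) : (lg p β).eval γ = 0 := by
  have h1 := mul_divByMonic_eq_iff_isRoot.mpr h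
  have h2 : p.eval γ = 0 := h'
  rw [← h1] at h2
  simp [sub_eq_zero, hne] at h2
  simp [lg, h2]

lemma interp {p : ℂ[X]} (hm : p.Monic) (hs : p.Separable) (q : ℂ[X]) :
    p ∣ q - ∑ β ∈ p.roots.toFinset, C (q.eval β) * lg p β := by
  set r := q - ∑ β ∈ p.roots.toFinset, C (q.eval β) * lg p β with hr
  by_cases h0 : r = 0
  · rw [h0]; exact dvd_zero _
  have hp := (IsAlgClosed.splits p).eq_prod_roots_of_monic hm
  rw [hp, Multiset.prod_X_sub_C_dvd_iff_le_roots h0,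
    Multiset.le_iff_subset (nodup_roots hs)]
  intro γ hγ
  have hγ' := (mem_roots'.mp hγ).2
  rw [mem_roots h0, IsRoot, hr, eval_sub, eval_finsetSum, Finset.sum_eq_single γ]
  · simp [lg_self hs hγ']
  · intro β hβ hne
    rw [Multiset.mem_toFinset] at hβ
    simp [lg_ne (mem_roots'.mp hβ).2 hγ' hne.symm]
  · intro h; exact absurd (Multiset.mem_toFinset.mpr hγ) h

lemma interpM {p : ℂ[X]} (hm : p.Monic) (hs : p.Separable) {k : ℕ} (M : Matrix (Fin k) (Fin k) ℂ)
    (hM : aeval M p = 0) (q : ℂ[X]) :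
    aeval M q = ∑ β ∈ p.roots.toFinset, q.eval β • aeval M (lg p β) := by
  have h := aeval_eq_zero_of_dvd_aeval_eq_zero (interp hm hs q) hM
  rw [map_sub, sub_eq_zero, map_sum] at h
  rw [h]
  refine Finset.sum_congr rfl fun β _ => ?_
  rw [map_mul, aeval_C, Algebra.smul_def]

lemma interpM_delta {p : ℂ[X]} (hm : p.Monic) (hs : p.Separable) {k : ℕ}
    (M : Matrix (Fin k) (Fin k) ℂ)
    (hM : aeval M p = 0) (q : ℂ[X]) (α : ℂ)
    (hq : ∀ β, p.IsRoot β → q.eval β = (lg p α).eval β) :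
    aeval M q = aeval M (lg p α) := by
  rw [interpM hm hs M hM q, interpM hm hs M hM (lg p α)]
  refine Finset.sum_congr rfl fun β hβ => ?_
  rw [hq β (mem_roots'.mp (Multiset.mem_toFinset.mp hβ)).2]

lemma conjT_aeval {k : ℕ} (M : Matrix (Fin k) (Fin k) ℂ) (q : ℂ[X]) :
    (aeval M q)ᴴ = aeval Mᴴ (q.map (starRingEnd ℂ)) := by
  induction q using Polynomial.induction_on' with
  | add p q hp hq => simp [hp, hq, Polynomial.map_add]
  | monomial n a =>
    simp [aeval_monomial, Matrix.conjTranspose_mul, Matrix.algebraMap_eq_diagonal,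
      Matrix.conjTranspose_pow]
    rw [← Matrix.conjTranspose_pow, ]
    ext i j
    simp [mul_comm, Matrix.diagonal_mul, Matrix.mul_diagonal, Pi.algebraMap_def]

lemma map_aevalM {K L : Type*} [Field K] [Field L] {k : ℕ} (σ : K →+* L)
    (M : Matrix (Fin k) (Fin k) K) (q : K[X]) :
    (aeval M q).map σ = aeval (M.map σ) (q.map σ) := by
  have := Polynomial.map_aeval_eq_aeval_map (φ := σ) (ψ := σ.mapMatrix (m := Fin k))
    (by ext a i j; simp [Matrix.algebraMap_matrix_apply]; split_ifs <;> simp) q M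
  simpa using this

section
variable {k : ℕ} {S R : Subring ℂ} (E : PreEmbedding k S R)

lemma a_add {s t : ℂ} (hs : s ∈ S) (ht : t ∈ S) : E.apply0 (s + t) = E.apply0 s + E.apply0 t := by
  have := E.map_add Unit (Matrix.of fun _ _ => s) (Matrix.of fun _ _ => t)
    (fun _ _ => hs) (fun _ _ => ht)
  have h2 : (Matrix.of fun _ _ => s : Matrix Unit Unit ℂ) + (Matrix.of fun _ _ => t)
    = Matrix.of fun _ _ => (s + t) := by ext; simp
  rw [h2] at this
  rw [PreEmbedding.apply0, this]; rfl

lemma a_zero : E.apply0 0 = 0 := by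
  have := a_add E S.zero_mem S.zero_mem
  simpa using this

lemma a_mul {s t : ℂ} (hs : s ∈ S) (ht : t ∈ S) : E.apply0 (s * t) = E.apply0 s * E.apply0 t := by
  have := E.map_mul Unit (Matrix.of fun _ _ => s) (Matrix.of fun _ _ => t)
    (fun _ _ => hs) (fun _ _ => ht)
  have h2 : (Matrix.of fun _ _ => s : Matrix Unit Unit ℂ) * (Matrix.of fun _ _ => t)
    = Matrix.of fun _ _ => (s * t) := by ext; simp [Matrix.mul_apply]
  rw [h2] at this
  rw [PreEmbedding.apply0, this]
  simp [PreEmbedding.apply0, Matrix.submatrix_mul_equiv]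

lemma a_one : E.apply0 1 = 1 := by
  have h2 : (Matrix.of fun _ _ => 1 : Matrix Unit Unit ℂ) = 1 := by ext; simp
  rw [PreEmbedding.apply0, h2, E.map_one]
  simp

lemma a_conj {s : ℂ} (hs : s ∈ S) : E.apply0 (starRingEnd ℂ s) = (E.apply0 s)ᴴ := by
  have := E.map_conjTranspose Unit (Matrix.of fun _ _ => s) (fun _ _ => hs)
  have h2 : (Matrix.of fun _ _ => s : Matrix Unit Unit ℂ)ᴴ
    = Matrix.of fun _ _ => (starRingEnd ℂ s) := by ext; simp
  rw [h2] at this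
  rw [PreEmbedding.apply0, this]; rfl

lemma a_smul {c s : ℂ} (hcR : c ∈ R) (hcS : c ∈ S) (hs : s ∈ S) :
    E.apply0 (c * s) = c • E.apply0 s := by
  have h1 := E.map_kronecker Unit Unit (Matrix.of fun _ _ => c) (Matrix.of fun _ _ => s)
    (fun _ _ => hcR) (fun _ _ => hcS) (fun _ _ => hs)
  have h2 := E.map_kronecker Unit Unit (Matrix.of fun _ _ => 1) (Matrix.of fun _ _ => c * s)
    (fun _ _ => R.one_mem) (fun _ _ => S.one_mem) (fun _ _ => S.mul_mem hcS hs)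
  have h3 : Matrix.kroneckerMap (· * ·) (Matrix.of fun _ _ => c : Matrix Unit Unit ℂ)
      (Matrix.of fun _ _ => s : Matrix Unit Unit ℂ) =
      Matrix.kroneckerMap (· * ·) (Matrix.of fun _ _ => 1 : Matrix Unit Unit ℂ)
      (Matrix.of fun _ _ => c * s : Matrix Unit Unit ℂ) := by ext; simp
  rw [h3, h2] at h1
  ext i j
  have := congrFun (congrFun h1 (((), ()), i)) (((), ()), j)
  simp at this
  simpa [PreEmbedding.apply0] using this

lemma a_mem {s : ℂ} (hs : s ∈ S) (i j) : E.apply0 s i j ∈ R :=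
  E.mem_R Unit _ (fun _ _ => hs) _ _

lemma a_cat {s : ℂ} (hs : s ∈ S) : E.apply0 s * E.proj = s • E.proj := by
  have := E.catalytic Unit (Matrix.of fun _ _ => s) (fun _ _ => hs)
  ext i j
  have := congrFun (congrFun this ((), i)) ((), j)
  simp [Matrix.mul_apply, Fintype.sum_prod_type] at this
  simpa [PreEmbedding.apply0, Matrix.mul_apply] using this

lemma a_pow {s : ℂ} (hs : s ∈ S) (n : ℕ) : E.apply0 (s ^ n) = E.apply0 s ^ n := by
  induction n with
  | zero => simp [a_one]
  | succ n ih => rw [pow_succ, pow_succ, a_mul E (S.pow_mem hs n) hs, ih]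

lemma a_cat_poly {s : ℂ} (hs : s ∈ S) (q : ℂ[X]) :
    aeval (E.apply0 s) q * E.proj = q.eval s • E.proj := by
  induction q using Polynomial.induction_on' with
  | add p q hp hq => simp [hp, hq, add_mul, add_smul]
  | monomial n a =>
    have : ∀ n : ℕ, E.apply0 s ^ n * E.proj = s ^ n • E.proj := by
      intro n
      induction n with
      | zero => simp
      | succ n ih => rw [pow_succ, mul_assoc, a_cat E hs, Matrix.mul_smul, ih, smul_smul, pow_succ,
                      mul_comm]
    rw [aeval_monomial, mul_assoc, this, ← Algebra.smul_def, smul_smul, eval_monomial]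

lemma a_sum {ι : Type*} (s : Finset ι) (f : ι → ℂ) (hf : ∀ i ∈ s, f i ∈ S) :
    E.apply0 (∑ i ∈ s, f i) = ∑ i ∈ s, E.apply0 (f i) := by
  classical
  induction s using Finset.induction_on with
  | empty => simp [a_zero]
  | insert a s ha ih =>
    rw [Finset.sum_insert ha, Finset.sum_insert ha, a_add E (hf a (by simp))
      (S.sum_mem fun i hi => hf i (by simp [hi])), ih fun i hi => hf i (by simp [hi])]

lemma a_poly_T {s : ℂ} (hs : s ∈ S) (q : ℂ[X]) (hq : ∀ m, q.coeff m ∈ R ⊓ S) :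
    E.apply0 (q.eval s) = aeval (E.apply0 s) q := by
  rw [eval_eq_sum_range, a_sum E _ _ fun i _ => S.mul_mem (hq i).2 (S.pow_mem hs i),
    aeval_eq_sum_range]
  refine Finset.sum_congr rfl fun i _ => ?_
  rw [a_smul E (hq i).1 (hq i).2 (S.pow_mem hs i), a_pow E hs]

lemma common_den (T : Subring ℂ) (N : ℕ) (f : ℕ → ℂ)
    (hf : ∀ i, ∃ a ∈ T, ∃ b ∈ T, b ≠ 0 ∧ f i = a / b) :
    ∃ b ∈ T, b ≠ 0 ∧ ∀ i < N, b * f i ∈ T := by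
  induction N with
  | zero => exact ⟨1, T.one_mem, one_ne_zero, by simp⟩
  | succ N ih =>
    obtain ⟨b, hb, hb0, h⟩ := ih
    obtain ⟨a, ha, c, hc, hc0, hN⟩ := hf N
    refine ⟨b * c, T.mul_mem hb hc, mul_ne_zero hb0 hc0, fun i hi => ?_⟩
    rcases Nat.lt_succ_iff_lt_or_eq.mp hi with h1 | rfl
    · rw [mul_comm b c, mul_assoc]; exact T.mul_mem hc (h i h1)
    · rw [hN, mul_assoc, mul_div_cancel₀ _ hc0]; exact T.mul_mem hb ha

lemma a_poly {s : ℂ} (hs : s ∈ S) (q : ℂ[X])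
    (hq : ∀ m, ∃ a ∈ R ⊓ S, ∃ b ∈ R ⊓ S, b ≠ 0 ∧ q.coeff m = a / b) (hqs : q.eval s ∈ S) :
    E.apply0 (q.eval s) = aeval (E.apply0 s) q := by
  obtain ⟨b, hb, hb0, h⟩ := common_den (R ⊓ S) (q.natDegree + 1) q.coeff hq
  have h1 := a_poly_T E hs (C b * q) (fun m => by
    rw [coeff_C_mul]
    by_cases hm : m < q.natDegree + 1
    · exact h m hm
    · rw [coeff_eq_zero_of_natDegree_lt (by omega), mul_zero]; exact Subring.zero_mem _)
  rw [eval_mul, eval_C, a_smul E hb.1 hb.2 hqs, map_mul, aeval_C, ← Algebra.smul_def] at h1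
  exact smul_right_injective _ hb0 h1

end

/-- The field of fractions of a subring of `ℂ`, inside `ℂ`. -/
def fracField (R : Subring ℂ) : Subfield ℂ where
  carrier := {z : ℂ | ∃ a ∈ R, ∃ b ∈ R, b ≠ 0 ∧ z = a / b}
  mul_mem' := by
    rintro _ _ ⟨a, ha, b, hb, hb0, rfl⟩ ⟨c, hc, d, hd, hd0, rfl⟩
    exact ⟨a * c, R.mul_mem ha hc, b * d, R.mul_mem hb hd, mul_ne_zero hb0 hd0, by field_simp⟩
  one_mem' := ⟨1, R.one_mem, 1, R.one_mem, one_ne_zero, by simp⟩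
  add_mem' := by
    rintro _ _ ⟨a, ha, b, hb, hb0, rfl⟩ ⟨c, hc, d, hd, hd0, rfl⟩
    exact ⟨a * d + b * c, R.add_mem (R.mul_mem ha hd) (R.mul_mem hb hc), b * d,
      R.mul_mem hb hd, mul_ne_zero hb0 hd0, div_add_div _ _ hb0 hd0⟩
  zero_mem' := ⟨0, R.zero_mem, 1, R.one_mem, one_ne_zero, by simp⟩
  neg_mem' := by
    rintro _ ⟨a, ha, b, hb, hb0, rfl⟩
    exact ⟨-a, R.neg_mem ha, b, hb, hb0, (neg_div _ _).symm⟩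
  inv_mem' := by
    rintro _ ⟨a, ha, b, hb, hb0, rfl⟩
    by_cases h : a = 0
    · exact ⟨0, R.zero_mem, 1, R.one_mem, one_ne_zero, by simp [h]⟩
    · exact ⟨b, hb, a, ha, h, by simp⟩

lemma minpoly_eq (F K : Subfield ℂ) (FT : Set ℂ) (α : ℂ) (p : ℂ[X]) (hp_monic : p.Monic)
    (hFT : FT = (K : Set ℂ) ∩ F)
    (hp_coeff : ∀ m, p.coeff m ∈ FT) (hp_root : p.eval α = 0)
    (hp_min : ∀ q : ℂ[X], (∀ m, q.coeff m ∈ FT) → q ≠ 0 → q.eval α = 0 → p.degree ≤ q.degree)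
    (hroots : ∀ z ∈ p.roots, z ∈ K) :
    IsIntegral F α ∧ (minpoly F α).map (algebraMap F ℂ) = p := by
  have hpl : p ∈ lifts (algebraMap F ℂ) := by
    rw [lifts_iff_coeff_lifts]
    intro n
    have := hp_coeff n
    rw [hFT] at this
    exact ⟨⟨_, this.2⟩, rfl⟩
  obtain ⟨p0, hp0, -, hp0m⟩ := lifts_and_natDegree_eq_and_monic hpl hp_monic
  have hint : IsIntegral F α := ⟨p0, hp0m, by rw [← eval_map, hp0, hp_root]⟩
  refine ⟨hint, ?_⟩
  set m := (minpoly F α).map (algebraMap F ℂ) with hm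
  have hmm : m.Monic := (minpoly.monic hint).map _
  have hdvd : m ∣ p := by
    rw [← hp0]
    exact Polynomial.map_dvd _ (minpoly.dvd F α (by rw [aeval_def, ← eval_map, hp0, hp_root]))
  have hmK : m ∈ lifts (algebraMap K ℂ) := by
    rw [(IsAlgClosed.splits m).eq_prod_roots_of_monic hmm]
    refine Subsemiring.multiset_prod_mem _ _ fun f hf => ?_
    obtain ⟨r, hr, rfl⟩ := Multiset.mem_map.mp hf
    have hr' := hroots r (Multiset.mem_of_le (roots.le_of_dvd hp_monic.ne_zero hdvd) hr)
    exact ⟨X - C ⟨r, hr'⟩, by simp; rfl⟩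
  have hmc : ∀ n, m.coeff n ∈ FT := by
    intro n
    rw [hFT]
    constructor
    · obtain ⟨x, hx⟩ := (lifts_iff_coeff_lifts _).mp hmK n
      rw [← hx]; exact x.2
    · rw [hm, coeff_map]; exact ((minpoly F α).coeff n).2
  have hme : m.eval α = 0 := by
    rw [hm, eval_map, ← aeval_def, minpoly.aeval]
  have hdeg := hp_min m hmc hmm.ne_zero hme
  exact (eq_of_monic_of_dvd_of_natDegree_le hmm hp_monic hdvd
    (natDegree_le_natDegree hdeg)).symm

open IntermediateField in
lemma emb_data (F : Subfield ℂ) (α : ℂ) (hint : IsIntegral F α) (L : Subfield ℂ)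
    (hL : L = Subfield.closure (insert α (F : Set ℂ))) (hαL : α ∈ L) :
    ∃ (n : ℕ) (σs : Fin n → (L →+* ℂ)),
      Function.Injective σs ∧
      (∀ (t : Fin n) (x : L), (x : ℂ) ∈ (F : Set ℂ) → σs t x = (x : ℂ)) ∧
      (∀ σ : L →+* ℂ, (∀ x : L, (x : ℂ) ∈ (F : Set ℂ) → σ x = (x : ℂ)) → ∃ t, σ = σs t) ∧
      (∃ e : Fin n ≃ {β // β ∈ ((minpoly F α).map (algebraMap F ℂ)).roots},
        ∀ t, (e t : ℂ) = σs t ⟨α, hαL⟩) := by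
  have hL' : L = F⟮α⟯.toSubfield := by
    rw [hL, adjoin_toSubfield]
    congr 1
    ext x
    constructor
    · rintro (rfl | h)
      · exact Or.inr rfl
      · exact Or.inl ⟨⟨x, h⟩, rfl⟩
    · rintro (⟨y, rfl⟩ | h)
      · exact Or.inr y.2
      · exact Or.inl h
  clear hL
  subst hL'
  let e1 : (F⟮α⟯ →ₐ[F] ℂ) ≃ {β // β ∈ ((minpoly F α).map (algebraMap F ℂ)).roots} :=
    algHomAdjoinIntegralEquiv F hint
  have he1 : ∀ σ : F⟮α⟯ →ₐ[F] ℂ, ((e1 σ : _) : ℂ) = σ (AdjoinSimple.gen F α) := by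
    intro σ
    have := algHomAdjoinIntegralEquiv_symm_apply_gen F (K := ℂ) hint (e1 σ)
    rw [← this]
    congr 1
    exact e1.symm_apply_apply σ
  have : Fintype (F⟮α⟯ →ₐ[F] ℂ) := by
    have : Fintype {β // β ∈ ((minpoly F α).map (algebraMap F ℂ)).roots} := by
      classical
      exact Fintype.ofFinset ((minpoly F α).map (algebraMap F ℂ)).roots.toFinset
        (fun x => Multiset.mem_toFinset)
    exact Fintype.ofEquiv _ e1.symm
  let e2 := Fintype.equivFin (F⟮α⟯ →ₐ[F] ℂ)
  refine ⟨_, fun t => (e2.symm t).toRingHom, ?_, ?_, ?_, e2.symm.trans e1, ?_⟩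
  · intro t t' h
    apply e2.symm.injective
    ext x
    exact DFunLike.congr_fun h x
  · intro t x hx
    exact (e2.symm t).commutes ⟨x, hx⟩
  · intro σ hσ
    let σ' : F⟮α⟯ →ₐ[F] ℂ := { (σ : F⟮α⟯ →+* ℂ) with
      commutes' := fun r => hσ ⟨r, F⟮α⟯.algebraMap_mem r⟩ r.2 }
    refine ⟨e2 σ', ?_⟩
    change σ = (e2.symm (e2 σ')).toRingHom
    rw [e2.symm_apply_apply]
  · intro t
    exact he1 _

lemma emb_eval (F L : Subfield ℂ) (α : ℂ) (hαL : α ∈ L) (hFL : F ≤ L) (σ : L →+* ℂ)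
    (hσ : ∀ x : L, (x : ℂ) ∈ (F : Set ℂ) → σ x = (x : ℂ)) (q : ℂ[X]) (hq : ∀ m, q.coeff m ∈ F)
    (hs : q.eval α ∈ L) : σ ⟨q.eval α, hs⟩ = q.eval (σ ⟨α, hαL⟩) := by
  have : (⟨q.eval α, hs⟩ : L) = ∑ i ∈ Finset.range (q.natDegree + 1),
      (⟨q.coeff i, hFL (hq i)⟩ : L) * ⟨α, hαL⟩ ^ i := by
    apply Subtype.ext
    rw [← L.coe_subtype, map_sum]
    simp [eval_eq_sum_range]
  rw [this, map_sum, eval_eq_sum_range]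
  refine Finset.sum_congr rfl fun i _ => ?_
  rw [map_mul, map_pow, hσ _ (hq i)]

end PreEmbAux

/-- Corollary `RSinterplay`. Under the hypotheses that `S` is generated
over `F_T = Frac(R ∩ S)` by powers of `α`, that the splitting field `K` of the minimal
polynomial of `α` over `F_T` is conjugation-closed, that `E = F_R(α)` is Kroneckerian over
`F_R = Frac(R)`, and that `F_T = K ∩ F_R`, every pre-embedding `Φ` of dimension `k` from `S`
to `R` admits a nonzero orthogonal projector `Π` with entries in `E` such that for all
`s ∈ S`, `Φ₀(s)` is the entrywise field trace `Σ_σ σ(s • Π)` over the `F_R`-embeddings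
`σ : E → ℂ`. -/
theorem preEmbedding_apply0_eq_fieldTrace (k : ℕ) (R S : Subring ℂ)
    (FT FR : Set ℂ)
    (hFT : FT = {z : ℂ | ∃ a ∈ R ⊓ S, ∃ b ∈ R ⊓ S, b ≠ 0 ∧ z = a / b})
    (hFR : FR = {z : ℂ | ∃ a ∈ R, ∃ b ∈ R, b ≠ 0 ∧ z = a / b})
    (α : ℂ) (hα : α ∈ S)
    (p : Polynomial ℂ) (d : ℕ)
    (hp_monic : p.Monic) (hp_coeff : ∀ m, p.coeff m ∈ FT) (hp_root : p.eval α = 0)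
    (hp_deg : p.natDegree = d)
    (hp_min : ∀ q : Polynomial ℂ, (∀ m, q.coeff m ∈ FT) → q ≠ 0 → q.eval α = 0 →
      p.degree ≤ q.degree)
    (hSgen : ∀ s ∈ S, ∃ (n : ℕ) (c : Fin n → ℂ),
      (∀ j, c j ∈ FT) ∧ s = ∑ j, c j * α ^ (j : ℕ))
    (K : Subfield ℂ)
    (hFTK : FT ⊆ (K : Set ℂ))
    (hroots : ∀ z ∈ p.roots, z ∈ K)
    (hKmin : ∀ K' : Subfield ℂ, FT ⊆ (K' : Set ℂ) → (∀ z ∈ p.roots, z ∈ K') → K ≤ K')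
    (hKconj : ∀ z ∈ K, (starRingEnd ℂ) z ∈ K)
    (hKron : ∀ σ : Subfield.closure (insert α FR) →+* ℂ,
      (∀ x : Subfield.closure (insert α FR), (x : ℂ) ∈ FR → σ x = (x : ℂ)) →
      ∀ (z : ℂ) (hz : z ∈ Subfield.closure (insert α FR))
        (hz' : (starRingEnd ℂ) z ∈ Subfield.closure (insert α FR)),
        σ ⟨(starRingEnd ℂ) z, hz'⟩ = (starRingEnd ℂ) (σ ⟨z, hz⟩))
    (hFT_eq : FT = (K : Set ℂ) ∩ FR)
    (E : PreEmbedding k S R) :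
    ∃ (P : Matrix (Fin k) (Fin k) ℂ) (n : ℕ)
      (σs : Fin n → (Subfield.closure (insert α FR) →+* ℂ)),
      P ≠ 0 ∧
      (∀ i j, P i j ∈ Subfield.closure (insert α FR)) ∧
      Pᴴ = P ∧ P * P = P ∧
      Function.Injective σs ∧
      (∀ (t : Fin n) (x : Subfield.closure (insert α FR)),
        (x : ℂ) ∈ FR → σs t x = (x : ℂ)) ∧
      (∀ σ : Subfield.closure (insert α FR) →+* ℂ,
        (∀ x : Subfield.closure (insert α FR), (x : ℂ) ∈ FR → σ x = (x : ℂ)) →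
        ∃ t, σ = σs t) ∧
      ∀ s : ℂ, s ∈ S →
        ∀ hmem : ∀ i j, (s • P) i j ∈ Subfield.closure (insert α FR),
          E.apply0 s = ∑ t : Fin n, Matrix.of fun i j => σs t ⟨(s • P) i j, hmem i j⟩ := by
  classical
  have hFR' : FR = (PreEmbAux.fracField R : Set ℂ) := hFR
  have hFTm : ∀ z ∈ FT, ∃ a ∈ R ⊓ S, ∃ b ∈ R ⊓ S, b ≠ 0 ∧ z = a / b := by
    intro z hz; rwa [hFT] at hz
  clear hFR hFT
  subst hFR'
  set F := PreEmbAux.fracField R with hF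
  have hFTF : ∀ z ∈ FT, z ∈ F := fun z hz => by rw [hFT_eq] at hz; exact hz.2
  have hRF : ∀ z ∈ R, z ∈ F := fun z hz => ⟨z, hz, 1, R.one_mem, one_ne_zero, by simp⟩
  obtain ⟨hint, hmin⟩ := PreEmbAux.minpoly_eq F K FT α p hp_monic hFT_eq hp_coeff hp_root
    hp_min hroots
  have hsep : p.Separable := by
    rw [← hmin]; exact (minpoly.irreducible hint).separable.map
  generalize hL : Subfield.closure (insert α (F : Set ℂ)) = L at *
  have hαL : α ∈ L := by rw [← hL]; exact Subfield.subset_closure (Set.mem_insert _ _)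
  have hFL : F ≤ L := by
    intro z hz; rw [← hL]; exact Subfield.subset_closure (Set.mem_insert_of_mem _ hz)
  obtain ⟨n, σs, hinj, hfix, hall, hex⟩ := PreEmbAux.emb_data F α hint L hL.symm hαL
  rw [hmin] at hex
  obtain ⟨e, he⟩ := hex
  set M := E.apply0 α with hM
  have hMR : ∀ i j, M i j ∈ L := fun i j => hFL (hRF _ (PreEmbAux.a_mem E hα i j))
  have hMp : Polynomial.aeval M p = 0 := by
    rw [← PreEmbAux.a_poly E hα p (fun m => hFTm _ (hp_coeff m))
      (by rw [hp_root]; exact S.zero_mem), hp_root, PreEmbAux.a_zero]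
  have hSq : ∀ s ∈ S, ∃ q : Polynomial ℂ, (∀ m, q.coeff m ∈ FT) ∧ s = q.eval α := by
    intro s hs
    obtain ⟨N, c, hc, hsum⟩ := hSgen s hs
    refine ⟨∑ j : Fin N, Polynomial.C (c j) * Polynomial.X ^ (j : ℕ), fun m => ?_, ?_⟩
    · rw [Polynomial.finsetSum_coeff, hFT_eq]
      refine (K ⊓ F).sum_mem fun j _ => ?_
      rw [Polynomial.coeff_C_mul_X_pow]
      split_ifs
      · have := hc j
        rw [hFT_eq] at this; exact this
      · exact (K ⊓ F).zero_mem
    · rw [hsum, Polynomial.eval_finsetSum]; simp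
  -- the coefficients live in `L`
  have hpl : p ∈ Polynomial.lifts L.subtype := by
    rw [Polynomial.lifts_iff_coeff_lifts]
    exact fun m => ⟨⟨_, hFL (hFTF _ (hp_coeff m))⟩, rfl⟩
  obtain ⟨pL, hpL⟩ := (Polynomial.mem_lifts _).mp hpl
  have hpLσ : ∀ σ : L →+* ℂ, (∀ x : L, (x : ℂ) ∈ (F : Set ℂ) → σ x = (x : ℂ)) →
      pL.map σ = p := by
    intro σ hσ
    ext m
    have h1 : ((pL.coeff m : L) : ℂ) = p.coeff m := by
      rw [← hpL, Polynomial.coeff_map]; rfl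
    rw [Polynomial.coeff_map, hσ _ (by rw [h1]; exact hFTF _ (hp_coeff m)), h1]
  let ML : Matrix (Fin k) (Fin k) L := Matrix.of fun i j => ⟨M i j, hMR i j⟩
  have hMLσ : ∀ σ : L →+* ℂ, (∀ x : L, (x : ℂ) ∈ (F : Set ℂ) → σ x = (x : ℂ)) →
      ML.map σ = M := by
    intro σ hσ
    ext i j
    exact hσ _ (hRF _ (PreEmbAux.a_mem E hα i j))
  let PL : Matrix (Fin k) (Fin k) L := Polynomial.aeval ML (PreEmbAux.lg pL ⟨α, hαL⟩)
  have hPLσ : ∀ σ : L →+* ℂ, (∀ x : L, (x : ℂ) ∈ (F : Set ℂ) → σ x = (x : ℂ)) →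
      PL.map σ = Polynomial.aeval M (PreEmbAux.lg p (σ ⟨α, hαL⟩)) := by
    intro σ hσ
    rw [PreEmbAux.map_aevalM, PreEmbAux.lg_map, hpLσ σ hσ, hMLσ σ hσ]
  have hroot : p.IsRoot α := hp_root
  set P := Polynomial.aeval M (PreEmbAux.lg p α) with hP
  have hPP : ∀ i j, P i j = (PL i j : ℂ) := by
    intro i j
    have := hPLσ L.subtype (fun x _ => rfl)
    rw [hP]
    exact (congrFun (congrFun this i) j).symm
  refine ⟨P, n, σs, ?_, ?_, ?_, ?_, hinj, hfix, hall, ?_⟩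
  · intro h0
    have := PreEmbAux.a_cat_poly E hα (PreEmbAux.lg p α)
    rw [← hM, ← hP, h0, PreEmbAux.lg_self hsep hroot] at this
    exact E.proj_ne_zero (by simpa using this.symm)
  · intro i j
    rw [hPP]; exact (PL i j).2
  · have hcS := E.hS_conj α hα
    obtain ⟨q, hq, hqα⟩ := hSq _ hcS
    have hMH : Mᴴ = Polynomial.aeval M q := by
      rw [hM, ← PreEmbAux.a_conj E hα, hqα]
      exact PreEmbAux.a_poly E hα q (fun m => hFTm _ (hq m)) (by rw [← hqα]; exact hcS)
    have hqL : q.eval α ∈ L := by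
      rw [Polynomial.eval_eq_sum_range]
      exact L.sum_mem fun i _ => L.mul_mem (hFL (hFTF _ (hq i))) (L.pow_mem hαL i)
    have hqβ : ∀ β, p.IsRoot β → q.eval β = starRingEnd ℂ β := by
      intro β hβ
      have hβ' : β ∈ p.roots := (Polynomial.mem_roots hp_monic.ne_zero).mpr hβ
      have h1 := he (e.symm ⟨β, hβ'⟩)
      rw [e.apply_symm_apply] at h1
      set σ := σs (e.symm ⟨β, hβ'⟩) with hσ
      have h2 := PreEmbAux.emb_eval F L α hαL hFL σ (hfix _) q (fun m => hFTF _ (hq m)) hqL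
      have h3 := hKron σ (hfix _) α hαL (by rw [hqα]; exact hqL)
      simp only [hqα] at h3
      have h1' : σ ⟨α, hαL⟩ = β := h1.symm
      rw [h1'] at h2 h3
      rw [← h2, h3]
    rw [hP, PreEmbAux.conjT_aeval, hMH, ← Polynomial.aeval_comp]
    refine PreEmbAux.interpM_delta hp_monic hsep M hMp _ α fun β hβ => ?_
    rw [Polynomial.eval_comp, hqβ β hβ, Polynomial.eval_map, Polynomial.eval₂_hom]
    by_cases hβα : β = α
    · rw [hβα, PreEmbAux.lg_self hsep hroot, map_one]
    · rw [PreEmbAux.lg_ne hroot hβ hβα, map_zero]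
  · rw [hP, ← map_mul]
    refine PreEmbAux.interpM_delta hp_monic hsep M hMp _ α fun β hβ => ?_
    rw [Polynomial.eval_mul]
    by_cases hβα : β = α
    · rw [hβα, PreEmbAux.lg_self hsep hroot, mul_one]
    · rw [PreEmbAux.lg_ne hroot hβ hβα, mul_zero]
  · intro s hs hmem
    obtain ⟨q, hq, rfl⟩ := hSq s hs
    have hqL : q.eval α ∈ L := by
      rw [Polynomial.eval_eq_sum_range]
      exact L.sum_mem fun i _ => L.mul_mem (hFL (hFTF _ (hq i))) (L.pow_mem hαL i)
    rw [PreEmbAux.a_poly E hα q (fun m => hFTm _ (hq m)) hs, ← hM,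
      PreEmbAux.interpM hp_monic hsep M hMp q]
    have hterm : ∀ t, (Matrix.of fun i j => σs t ⟨(q.eval α • P) i j, hmem i j⟩) =
        q.eval (e t : ℂ) • Polynomial.aeval M (PreEmbAux.lg p (e t : ℂ)) := by
      intro t
      rw [he t, ← PreEmbAux.emb_eval F L α hαL hFL (σs t) (hfix t) q
        (fun m => hFTF _ (hq m)) hqL, ← hPLσ (σs t) (hfix t)]
      ext i j
      change σs t _ = σs t _ * σs t (PL i j)
      rw [← map_mul]
      congr 1
      apply Subtype.ext
      simp [hPP]
    rw [Finset.sum_congr rfl fun t _ => hterm t]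
    symm
    refine Finset.sum_bij (fun t _ => (e t : ℂ)) (fun t _ => Multiset.mem_toFinset.mpr (e t).2)
      (fun t _ t' _ h => e.injective (Subtype.ext h)) (fun β hβ => ?_) (fun _ _ => rfl)
    exact ⟨e.symm ⟨β, Multiset.mem_toFinset.mp hβ⟩, Finset.mem_univ _, by simp⟩
end
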